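/- arXiv:2605.08481 — 5 statements merged into one kernel-verified Lean document; each statement's English description precedes it below -/
import Mathlib

section
/- Let $P$ denote the set of functions $u : \mathbb{R}^2 \to \mathbb{C}$ that are $2\pi\mathbb{Z}^2$-periodic, i.e. $u(x_1 + 2\pi, x_2) = u(x_1, x_2 + 2\pi) = u(x_1,x_2)$ for all $(x_1,x_2)$. Define $(S_0 u)(x_1,x_2) := e^{i x_2} u(x_1 + \pi, -x_2)$ and $(S_1 u)(x_1,x_2) := e^{i(x_1 + x_2)} u(-x_1, -x_2)$. Then $S_0$ and $S_1$ map $P$ into $P$, and on $P$ one has $S_0^2 = \mathrm{id}$, $S_1^2 = \mathrm{id}$, and $S_1 S_0 = -S_0 S_1$. -/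
open Real

/-- The set of `2πℤ²`-periodic functions on `ℝ²`. -/
def PeriodicFuns : Set (ℝ × ℝ → ℂ) :=
  {u | ∀ x1 x2 : ℝ, u (x1 + 2 * Real.pi, x2) = u (x1, x2) ∧
        u (x1, x2 + 2 * Real.pi) = u (x1, x2)}

/-- `(S₀ u)(x₁,x₂) = e^{i x₂} u(x₁+π, -x₂)`. -/
noncomputable def S0Op (u : ℝ × ℝ → ℂ) : ℝ × ℝ → ℂ :=
  fun x => Complex.exp (Complex.I * (x.2 : ℂ)) * u (x.1 + Real.pi, -x.2)

/-- `(S₁ u)(x₁,x₂) = e^{i (x₁+x₂)} u(-x₁, -x₂)`. -/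
noncomputable def S1Op (u : ℝ × ℝ → ℂ) : ℝ × ℝ → ℂ :=
  fun x => Complex.exp (Complex.I * ((x.1 : ℂ) + (x.2 : ℂ))) * u (-x.1, -x.2)

/-- The symmetries `S₀`, `S₁` preserve the space of `2πℤ²`-periodic functions,
are involutions on it, and anticommute: `S₁ S₀ = -S₀ S₁`. -/
theorem S0_S1_involutions_anticommute (u : ℝ × ℝ → ℂ) (hu : u ∈ PeriodicFuns) :
    S0Op u ∈ PeriodicFuns ∧ S1Op u ∈ PeriodicFuns ∧
    S0Op (S0Op u) = u ∧ S1Op (S1Op u) = u ∧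
    S1Op (S0Op u) = -(S0Op (S1Op u)) := by
  have h1 : ∀ a b : ℝ, u (a + 2 * Real.pi, b) = u (a, b) := fun a b => (hu a b).1
  have h2 : ∀ a b : ℝ, u (a, b + 2 * Real.pi) = u (a, b) := fun a b => (hu a b).2
  have h1' : ∀ a b : ℝ, u (-(a + 2 * Real.pi), b) = u (-a, b) := fun a b => by
    rw [← h1 (-(a + 2 * Real.pi)) b]; congr 2; ring
  have h2' : ∀ a b : ℝ, u (a, -(b + 2 * Real.pi)) = u (a, -b) := fun a b => by
    rw [← h2 a (-(b + 2 * Real.pi))]; congr 2; ring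
  have e2 : ∀ z w : ℂ, w = z + 2 * Real.pi * Complex.I → Complex.exp w = Complex.exp z := by
    rintro z w rfl
    exact Complex.exp_periodic z
  refine ⟨fun a b => ⟨?_, ?_⟩, fun a b => ⟨?_, ?_⟩, ?_, ?_, ?_⟩
  · simp only [S0Op]
    rw [← h1 (a + Real.pi)]
    congr 3; ring
  · simp only [S0Op]
    rw [h2', e2 (Complex.I * (b : ℂ))]
    push_cast; ring
  · simp only [S1Op]
    rw [h1', e2 (Complex.I * ((a : ℂ) + b))]
    push_cast; ring
  · simp only [S1Op]
    rw [h2', e2 (Complex.I * ((a : ℂ) + b))]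
    push_cast; ring
  · funext ⟨a, b⟩
    simp only [S0Op]
    rw [← mul_assoc, ← Complex.exp_add, neg_neg, ← h1 a b,
      show a + Real.pi + Real.pi = a + 2 * Real.pi by ring]
    simp
  · funext ⟨a, b⟩
    simp only [S1Op]
    rw [← mul_assoc, ← Complex.exp_add, neg_neg, neg_neg]
    have : Complex.I * ((a : ℂ) + b) + Complex.I * (((-a : ℝ) : ℂ) + ((-b : ℝ) : ℂ)) = 0 := by
      push_cast; ring
    rw [this]; simp
  · funext ⟨a, b⟩
    simp only [S0Op, S1Op, Pi.neg_apply]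
    rw [← mul_assoc, ← mul_assoc, ← Complex.exp_add, ← Complex.exp_add, neg_neg,
      ← h1 (-(a + Real.pi)) b, show -(a + Real.pi) + 2 * Real.pi = -a + Real.pi by ring,
      ← neg_mul]
    congr 1
    have e : Complex.I * (b : ℂ) + Complex.I * (((a + Real.pi : ℝ) : ℂ) + ((-b : ℝ) : ℂ))
        = (Complex.I * ((a : ℂ) + b) + Complex.I * ((-b : ℝ) : ℂ)) + Real.pi * Complex.I := by
      push_cast; ring
    rw [e, Complex.exp_add _ (Real.pi * Complex.I), Complex.exp_pi_mul_I]
    ring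
end

section
/- Let $\gamma \in \mathbb{R}$ and set $K := \lceil 4|\gamma| \rceil + 1$. Define $\epsilon^0_{2a-1}(\kappa) := (a-1+\kappa)^2$, $\epsilon^0_{2a}(\kappa) := (a-\kappa)^2$ for $a \in \mathbb{N}_+$. Suppose that for each $j \in \mathbb{N}_+$, $\epsilon_j : [0, 1/2] \to \mathbb{R}$ is continuous and satisfies $|\epsilon_j(\kappa) - \epsilon^0_j(\kappa)| \le |\gamma|$ for all $\kappa \in [0,1/2]$. Then for all integers $m, n$ with $\min(m-1, n) \ge K$ there exists $k = (k_1, k_2) \in [0, 1/2]^2$ such that $$\epsilon_m(k_1) + \epsilon_n(k_2) = \epsilon_{m-1}(k_1) + \epsilon_{n+1}(k_2).$$ -/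
open Real

/-- The `j`-th eigenvalue of the free 1D Bloch operator `(D_t - κ)²`:
`ε⁰_{2a-1}(κ) = (a-1+κ)²`, `ε⁰_{2a}(κ) = (a-κ)²`. -/
noncomputable def eps0 (j : ℕ) (κ : ℝ) : ℝ :=
  if j % 2 = 1 then ((((j + 1) / 2 : ℕ) : ℝ) - 1 + κ) ^ 2
  else (((j / 2 : ℕ) : ℝ) - κ) ^ 2

lemma eps0_gap (p : ℕ) :
    ∃ a ∈ Set.Icc (0 : ℝ) (1 / 2), ∃ b ∈ Set.Icc (0 : ℝ) (1 / 2),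
      eps0 (p + 1) a - eps0 p a = p ∧ eps0 (p + 1) b - eps0 p b = 0 := by
  rcases Nat.even_or_odd' p with ⟨c, rfl | rfl⟩
  · refine ⟨1 / 2, by norm_num, 0, by norm_num, ?_⟩
    have h1 : (2 * c + 1) % 2 = 1 := by omega
    have h2 : ¬ (2 * c) % 2 = 1 := by omega
    have h3 : (2 * c + 1 + 1) / 2 = c + 1 := by omega
    have h4 : (2 * c) / 2 = c := by omega
    unfold eps0
    rw [if_pos h1, if_neg h2, if_pos h1, if_neg h2, h3, h4]
    push_cast
    constructor <;> ring
  · refine ⟨0, by norm_num, 1 / 2, by norm_num, ?_⟩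
    have h1 : (2 * c + 1) % 2 = 1 := by omega
    have h2 : ¬ (2 * c + 1 + 1) % 2 = 1 := by omega
    have h3 : (2 * c + 1 + 1) / 2 = c + 1 := by omega
    unfold eps0
    rw [if_pos h1, if_neg h2, if_pos h1, if_neg h2, h3]
    push_cast
    constructor <;> ring

/-- If each perturbed band `ε_j` is continuous on `[0,1/2]` and within `|γ|`
of the free band `ε⁰_j`, then for `min(m-1, n) ≥ K := ⌈4|γ|⌉ + 1` the 2D
bands `E_{m,n}` and `E_{m-1,n+1}` intersect somewhere on `[0,1/2]²`. -/
theorem adjacent_bands_intersect (γ : ℝ) (eps : ℕ → ℝ → ℝ)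
    (hcont : ∀ j : ℕ, 1 ≤ j → ContinuousOn (eps j) (Set.Icc (0 : ℝ) (1 / 2)))
    (hbound : ∀ j : ℕ, 1 ≤ j → ∀ κ ∈ Set.Icc (0 : ℝ) (1 / 2),
      |eps j κ - eps0 j κ| ≤ |γ|)
    (m n : ℕ) (hmn : ⌈4 * |γ|⌉₊ + 1 ≤ min (m - 1) n) :
    ∃ k1 ∈ Set.Icc (0 : ℝ) (1 / 2), ∃ k2 ∈ Set.Icc (0 : ℝ) (1 / 2),
      eps m k1 + eps n k2 = eps (m - 1) k1 + eps (n + 1) k2 := by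
  have hp : ⌈4 * |γ|⌉₊ + 1 ≤ m - 1 := hmn.trans (min_le_left _ _)
  have hn : ⌈4 * |γ|⌉₊ + 1 ≤ n := hmn.trans (min_le_right _ _)
  obtain ⟨p, rfl⟩ : ∃ p, m = p + 1 := ⟨m - 1, by omega⟩
  rw [Nat.add_sub_cancel] at hp ⊢
  have hc : 4 * |γ| ≤ (⌈4 * |γ|⌉₊ : ℝ) := Nat.le_ceil _
  have hp' : (⌈4 * |γ|⌉₊ : ℝ) + 1 ≤ p := by exact_mod_cast hp
  have hn' : (⌈4 * |γ|⌉₊ : ℝ) + 1 ≤ n := by exact_mod_cast hn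
  obtain ⟨a, ha, b, hb, hpa, hpb⟩ := eps0_gap p
  obtain ⟨c, hc', d, hd, hnc, hnd⟩ := eps0_gap n
  have hconn : IsPreconnected (Set.Icc (0 : ℝ) (1 / 2) ×ˢ Set.Icc (0 : ℝ) (1 / 2)) :=
    isPreconnected_Icc.prod isPreconnected_Icc
  have c1 : ∀ j : ℕ, 1 ≤ j → ContinuousOn (fun k : ℝ × ℝ => eps j k.1)
      (Set.Icc (0 : ℝ) (1 / 2) ×ˢ Set.Icc (0 : ℝ) (1 / 2)) := fun j hj =>
    (hcont j hj).comp continuousOn_fst (fun k hk => hk.1)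
  have c2 : ∀ j : ℕ, 1 ≤ j → ContinuousOn (fun k : ℝ × ℝ => eps j k.2)
      (Set.Icc (0 : ℝ) (1 / 2) ×ˢ Set.Icc (0 : ℝ) (1 / 2)) := fun j hj =>
    (hcont j hj).comp continuousOn_snd (fun k hk => hk.2)
  obtain ⟨k, hk, hke⟩ := hconn.intermediate_value₂
    (a := (b, c)) (b := (a, d)) ⟨hb, hc'⟩ ⟨ha, hd⟩
    ((c1 (p + 1) (by omega)).add (c2 n (by omega)))
    ((c1 p (by omega)).add (c2 (n + 1) (by omega)))
    (by
      have h1 := abs_le.1 (hbound (p + 1) (by omega) b hb)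
      have h2 := abs_le.1 (hbound p (by omega) b hb)
      have h3 := abs_le.1 (hbound (n + 1) (by omega) c hc')
      have h4 := abs_le.1 (hbound n (by omega) c hc')
      show eps (p + 1) b + eps n c ≤ eps p b + eps (n + 1) c
      linarith [h1.2, h2.1, h3.1, h4.2])
    (by
      have h1 := abs_le.1 (hbound (p + 1) (by omega) a ha)
      have h2 := abs_le.1 (hbound p (by omega) a ha)
      have h3 := abs_le.1 (hbound (n + 1) (by omega) d hd)
      have h4 := abs_le.1 (hbound n (by omega) d hd)
      show eps p a + eps (n + 1) d ≤ eps (p + 1) a + eps n d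
      linarith [h1.1, h2.2, h3.2, h4.1])
  exact ⟨k.1, hk.1, k.2, hk.2, hke⟩
end

section
/- Let $\gamma \in \mathbb{R}$. Define $\epsilon^0_{2a-1}(\kappa) := (a-1+\kappa)^2$, $\epsilon^0_{2a}(\kappa) := (a-\kappa)^2$ for $a \in \mathbb{N}_+$. Suppose that for each $j \in \mathbb{N}_+$, $\epsilon_j : [0, 1/2] \to \mathbb{R}$ is continuous and satisfies $|\epsilon_j(\kappa) - \epsilon^0_j(\kappa)| \le |\gamma|$ for all $\kappa \in [0,1/2]$, and set $E_{m,n}(k) := \epsilon_m(k_1) + \epsilon_n(k_2)$ for $(m,n) \in \mathbb{N}_+^2$, $k \in [0,1/2]^2$. If $(m,n) \in \mathbb{N}_+^2$ satisfies $m + n \ge 8\lceil 4|\gamma| \rceil + 12$, then there exist pairwise distinct pairs $(m_j, n_j) \in \mathbb{N}_+^2$, $j \ge 0$, with $(m_0, n_0) = (m, n)$, such that for every $j \ge 0$ there is $k_j \in [0,1/2]^2$ with $E_{m_j, n_j}(k_j) = E_{m_{j+1}, n_{j+1}}(k_j)$. -/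
open Real

namespace ChainAux

noncomputable def lo (i : ℕ) : ℝ := if i % 2 = 1 then 0 else 1 / 2

lemma lo_mem (i : ℕ) : lo i ∈ Set.Icc (0 : ℝ) (1 / 2) := by
  unfold lo; split_ifs <;> norm_num

lemma eps0_same (i : ℕ) : eps0 i (lo i) = ((i : ℝ) - 1) ^ 2 / 4 := by
  unfold eps0 lo
  rcases Nat.even_or_odd' i with ⟨a, rfl | rfl⟩
  · have h1 : ¬ (2 * a) % 2 = 1 := by omega
    have h2 : 2 * a / 2 = a := by omega
    rw [if_neg h1, if_neg h1, h2]; push_cast; ring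
  · have h1 : (2 * a + 1) % 2 = 1 := by omega
    have h2 : (2 * a + 1 + 1) / 2 = a + 1 := by omega
    rw [if_pos h1, if_pos h1, h2]; push_cast; ring

lemma eps0_diff (i j : ℕ) (h : i % 2 ≠ j % 2) : eps0 i (lo j) = (i : ℝ) ^ 2 / 4 := by
  unfold eps0 lo
  rcases Nat.even_or_odd' i with ⟨a, rfl | rfl⟩
  · have h1 : ¬ (2 * a) % 2 = 1 := by omega
    have h3 : j % 2 = 1 := by omega
    have h2 : 2 * a / 2 = a := by omega
    rw [if_neg h1, if_pos h3, h2]; push_cast; ring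
  · have h1 : (2 * a + 1) % 2 = 1 := by omega
    have h3 : ¬ j % 2 = 1 := by omega
    have h2 : (2 * a + 1 + 1) / 2 = a + 1 := by omega
    rw [if_pos h1, if_neg h3, h2]; push_cast; ring

/-- Intersection of two bands. -/
def Edge (eps : ℕ → ℝ → ℝ) (v w : ℕ × ℕ) : Prop :=
  ∃ k1 ∈ Set.Icc (0 : ℝ) (1 / 2), ∃ k2 ∈ Set.Icc (0 : ℝ) (1 / 2),
    eps v.1 k1 + eps v.2 k2 = eps w.1 k1 + eps w.2 k2

/-- The only property of the intersection relation that is used. -/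
def Rich (L : ℕ) (E : ℕ × ℕ → ℕ × ℕ → Prop) : Prop :=
  ∀ m n m' n' : ℕ, 1 ≤ m → 1 ≤ n → 1 ≤ m' → 1 ≤ n' → m % 2 ≠ m' % 2 → n % 2 ≠ n' % 2 →
    ((m : ℤ) - 1) ^ 2 + ((n : ℤ) - 1) ^ 2 + 4 * L ≤ (m' : ℤ) ^ 2 + (n' : ℤ) ^ 2 →
    ((m' : ℤ) - 1) ^ 2 + ((n' : ℤ) - 1) ^ 2 + 4 * L ≤ (m : ℤ) ^ 2 + (n : ℤ) ^ 2 →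
    E (m, n) (m', n')

lemma edge_rich (γ : ℝ) (eps : ℕ → ℝ → ℝ)
    (hcont : ∀ j : ℕ, 1 ≤ j → ContinuousOn (eps j) (Set.Icc (0 : ℝ) (1 / 2)))
    (hbound : ∀ j : ℕ, 1 ≤ j → ∀ κ ∈ Set.Icc (0 : ℝ) (1 / 2),
      |eps j κ - eps0 j κ| ≤ |γ|) : Rich ⌈4 * |γ|⌉₊ (Edge eps) := by
  intro m n m' n' hm hn hm' hn' pm pn h1 h2
  have hL := Nat.le_ceil (4 * |γ|)
  generalize ⌈4 * |γ|⌉₊ = L at *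
  have h1r : ((m : ℝ) - 1) ^ 2 + ((n : ℝ) - 1) ^ 2 + 4 * L ≤ (m' : ℝ) ^ 2 + (n' : ℝ) ^ 2 := by
    exact_mod_cast h1
  have h2r : ((m' : ℝ) - 1) ^ 2 + ((n' : ℝ) - 1) ^ 2 + 4 * L ≤ (m : ℝ) ^ 2 + (n : ℝ) ^ 2 := by
    exact_mod_cast h2
  set S : Set (ℝ × ℝ) := Set.Icc (0 : ℝ) (1 / 2) ×ˢ Set.Icc (0 : ℝ) (1 / 2) with hS
  have hpre : IsPreconnected S := isPreconnected_Icc.prod isPreconnected_Icc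
  have c1 : ∀ j, 1 ≤ j → ContinuousOn (fun k : ℝ × ℝ => eps j k.1) S := fun j hj =>
    (hcont j hj).comp continuousOn_fst (fun k hk => hk.1)
  have c2 : ∀ j, 1 ≤ j → ContinuousOn (fun k : ℝ × ℝ => eps j k.2) S := fun j hj =>
    (hcont j hj).comp continuousOn_snd (fun k hk => hk.2)
  have key := hpre.intermediate_value₂ (a := (lo m, lo n)) (b := (lo m', lo n'))
    ⟨lo_mem m, lo_mem n⟩ ⟨lo_mem m', lo_mem n'⟩
    ((c1 m hm).add (c2 n hn)) ((c1 m' hm').add (c2 n' hn'))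
  have b1 := abs_le.1 (hbound m hm _ (lo_mem m))
  have b2 := abs_le.1 (hbound n hn _ (lo_mem n))
  have b3 := abs_le.1 (hbound m' hm' _ (lo_mem m))
  have b4 := abs_le.1 (hbound n' hn' _ (lo_mem n))
  have b5 := abs_le.1 (hbound m hm _ (lo_mem m'))
  have b6 := abs_le.1 (hbound n hn _ (lo_mem n'))
  have b7 := abs_le.1 (hbound m' hm' _ (lo_mem m'))
  have b8 := abs_le.1 (hbound n' hn' _ (lo_mem n'))
  rw [eps0_same] at b1 b2 b7 b8
  rw [eps0_diff _ _ pm.symm] at b3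
  rw [eps0_diff _ _ pn.symm] at b4
  rw [eps0_diff _ _ pm] at b5
  rw [eps0_diff _ _ pn] at b6
  obtain ⟨k, hk, e⟩ := key (by
    show eps m (lo m) + eps n (lo n) ≤ eps m' (lo m) + eps n' (lo n)
    linarith [b1.2, b2.2, b3.1, b4.1]) (by
    show eps m' (lo m') + eps n' (lo n') ≤ eps m (lo m') + eps n (lo n')
    linarith [b5.1, b6.1, b7.2, b8.2])
  exact ⟨k.1, hk.1, k.2, hk.2, e⟩

/-- An infinite chain starting at `v`. -/
def Chain (E : ℕ × ℕ → ℕ × ℕ → Prop) (f : ℕ → ℕ × ℕ) (v : ℕ × ℕ) : Prop :=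
  Function.Injective f ∧ f 0 = v ∧ (∀ j : ℕ, 1 ≤ (f j).1 ∧ 1 ≤ (f j).2) ∧
    ∀ j : ℕ, E (f j) (f (j + 1))

def cons (v : ℕ × ℕ) (f : ℕ → ℕ × ℕ) : ℕ → ℕ × ℕ
  | 0 => v
  | j + 1 => f j

lemma chain_cons {E : ℕ × ℕ → ℕ × ℕ → Prop} {f : ℕ → ℕ × ℕ} {v w : ℕ × ℕ}
    (hf : Chain E f w) (h1 : 1 ≤ v.1) (h2 : 1 ≤ v.2) (hE : E v w) (hv : ∀ j, f j ≠ v) :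
    Chain E (cons v f) v := by
  obtain ⟨hi, h0, hp, he⟩ := hf
  refine ⟨?_, rfl, ?_, ?_⟩
  · rintro (_ | a) (_ | b) hab
    · rfl
    · exact absurd hab.symm (hv b)
    · exact absurd hab (hv a)
    · exact congrArg _ (hi hab)
  · rintro (_ | j)
    · exact ⟨h1, h2⟩
    · exact hp j
  · rintro (_ | j)
    · show E v (f 0)
      rw [h0]; exact hE
    · exact he j

def ray (x y j : ℕ) : ℕ × ℕ :=
  if j % 3 = 0 then (x + j / 3, y + j / 3)
  else if j % 3 = 1 then (x + j / 3 + 3, y + j / 3 - 1)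
  else (x + j / 3 + 2, y + j / 3)

lemma ray0 (x y k : ℕ) : ray x y (3 * k) = (x + k, y + k) := by
  have h1 : 3 * k % 3 = 0 := by omega
  have h2 : 3 * k / 3 = k := by omega
  simp [ray]

lemma ray1 (x y k : ℕ) : ray x y (3 * k + 1) = (x + k + 3, y + k - 1) := by
  have h1 : (3 * k + 1) % 3 = 1 := by omega
  have h2 : (3 * k + 1) / 3 = k := by omega
  simp [ray, h1, h2]

lemma ray2 (x y k : ℕ) : ray x y (3 * k + 2) = (x + k + 2, y + k) := by
  have h1 : (3 * k + 2) % 3 = 2 := by omega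
  have h2 : (3 * k + 2) / 3 = k := by omega
  simp [ray, h1, h2]

lemma mod3 (j : ℕ) : ∃ k, j = 3 * k ∨ j = 3 * k + 1 ∨ j = 3 * k + 2 := ⟨j / 3, by omega⟩

lemma ray_chain {L : ℕ} {E : ℕ × ℕ → ℕ × ℕ → Prop} (hE : Rich L E) (x y : ℕ)
    (hx : L + 1 ≤ x) (hy : x + L + 2 ≤ y) : Chain E (ray x y) (x, y) := by
  refine ⟨?_, by simp [ray], ?_, ?_⟩
  · intro a b hab
    obtain ⟨k, rfl | rfl | rfl⟩ := mod3 a <;> obtain ⟨l, rfl | rfl | rfl⟩ := mod3 b <;>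
      simp only [ray0, ray1, ray2, Prod.mk.injEq] at hab <;> omega
  · intro a
    obtain ⟨k, rfl | rfl | rfl⟩ := mod3 a <;> simp only [ray0, ray1, ray2] <;> omega
  · intro a
    obtain ⟨z, rfl⟩ : ∃ z, y = z + 1 := ⟨y - 1, by omega⟩
    have hx' : (L : ℤ) + 1 ≤ x := by exact_mod_cast hx
    have hy' : (x : ℤ) + L + 2 ≤ z + 1 := by exact_mod_cast hy
    obtain ⟨k, rfl | rfl | rfl⟩ := mod3 a
    · rw [ray0, ray1, show z + 1 + k - 1 = z + k by omega]
      apply hE <;> first | omega | (push_cast; nlinarith [Int.natCast_nonneg k])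
    · rw [show 3 * k + 1 + 1 = 3 * k + 2 by ring, ray2, ray1,
        show z + 1 + k - 1 = z + k by omega]
      apply hE <;> first | omega | (push_cast; nlinarith [Int.natCast_nonneg k])
    · rw [show 3 * k + 2 + 1 = 3 * (k + 1) by ring, ray2, ray0]
      apply hE <;> first | omega | (push_cast; nlinarith [Int.natCast_nonneg k])

lemma walk {L : ℕ} {E : ℕ × ℕ → ℕ × ℕ → Prop} (hE : Rich L E) (d : ℕ) : ∀ y : ℕ,
    L + 1 ≤ y → 3 * L + 4 ≤ L + 1 + d + y →
    ∃ f, Chain E f (L + 1 + d, y) ∧ ∀ j, L + 1 ≤ (f j).1 ∧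
      (L + 1 + d + y < (f j).1 + (f j).2 ∨
        (L + 1 + d + y = (f j).1 + (f j).2 ∧ (f j).1 ≤ L + 1 + d)) := by
  induction d with
  | zero =>
    intro y _ hs
    refine ⟨_, ray_chain hE (L + 1 + 0) y (by omega) (by omega), ?_⟩
    intro a
    obtain ⟨k, rfl | rfl | rfl⟩ := mod3 a <;> simp only [ray0, ray1, ray2] <;> omega
  | succ d ih =>
    intro y hy hs
    have hy' : (L : ℤ) + 1 ≤ y := by exact_mod_cast hy
    obtain ⟨f, hf, hj⟩ := ih (y + 1) (by omega) (by omega)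
    refine ⟨cons (L + 1 + (d + 1), y) f, chain_cons hf ?_ ?_ ?_ ?_, ?_⟩
    · show 1 ≤ L + 1 + (d + 1)
      omega
    · show 1 ≤ y
      omega
    · apply hE <;> first | omega | (push_cast; nlinarith)
    · intro j h
      have := hj j
      rw [h] at this
      simp only at this
      omega
    · rintro (_ | j)
      · exact ⟨show L + 1 ≤ L + 1 + (d + 1) by omega, Or.inr ⟨rfl, le_rfl⟩⟩
      · simp only [cons]
        have := hj j
        omega

lemma small {L : ℕ} {E : ℕ × ℕ → ℕ × ℕ → Prop} (hE : Rich L E) (m n : ℕ) (hm : 1 ≤ m)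
    (hmL : m ≤ L) (hs : 8 * L + 12 ≤ m + n) : ∃ f, Chain E f (m, n) := by
  have hex : ∃ q : ℕ, 2 * (L : ℤ) * (m + 2 * L) + L ≤ (q + 1) * (n - q - 1) := by
    refine ⟨L, ?_⟩
    have h1 : (7 * L + 12 : ℤ) ≤ n := by omega
    have h2 : (m : ℤ) ≤ L := by omega
    nlinarith
  have hqL : Nat.find hex ≤ L := by
    apply Nat.find_min'
    have h1 : (7 * L + 12 : ℤ) ≤ n := by omega
    have h2 : (m : ℤ) ≤ L := by omega
    nlinarith
  have hq := Nat.find_spec hex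
  have hmin : ∀ r, r < Nat.find hex → _ := fun r hr => Nat.find_min hex hr
  generalize Nat.find hex = q at *
  obtain ⟨n', rfl⟩ : ∃ n', n = n' + 2 * q + 1 := ⟨n - 2 * q - 1, by omega⟩
  obtain ⟨f, hf, hj⟩ := walk hE (m + 3 * L) n' (by omega) (by omega)
  refine ⟨_, chain_cons hf hm (show 1 ≤ n' + 2 * q + 1 by omega) ?_ ?_⟩
  · apply hE
    · omega
    · omega
    · omega
    · omega
    · omega
    · omega
    · rcases q with _ | r
      · push_cast at hq ⊢; nlinarith
      · have h := hmin r (by omega)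
        rw [not_le] at h
        push_cast at h ⊢
        nlinarith
    · push_cast at hq ⊢; nlinarith
  · intro j h
    have := hj j
    rw [h] at this
    simp only at this
    omega

lemma rich_swap {L : ℕ} {E : ℕ × ℕ → ℕ × ℕ → Prop} (hE : Rich L E) :
    Rich L (fun v w => E v.swap w.swap) := by
  intro m n m' n' hm hn hm' hn' pm pn h1 h2
  exact hE n m n' m' hn hm hn' hm' pn pm (by linarith) (by linarith)

lemma main {L : ℕ} {E : ℕ × ℕ → ℕ × ℕ → Prop} (hE : Rich L E) (m n : ℕ) (hm : 1 ≤ m)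
    (hn : 1 ≤ n) (hs : 8 * L + 12 ≤ m + n) : ∃ f, Chain E f (m, n) := by
  by_cases h1 : m ≤ L
  · exact small hE m n hm h1 hs
  by_cases h2 : n ≤ L
  · obtain ⟨f, hi, h0, hp, he⟩ := small (rich_swap hE) n m hn h2 (by omega)
    refine ⟨fun j => (f j).swap, Prod.swap_injective.comp hi, ?_, fun j => (hp j).symm, he⟩
    simp [h0]
  · obtain ⟨d, rfl⟩ : ∃ d, m = L + 1 + d := ⟨m - (L + 1), by omega⟩
    obtain ⟨f, hf, _⟩ := walk hE d n (by omega) (by omega)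
    exact ⟨f, hf⟩

end ChainAux

/-- Proposition 5.2 of the paper: if each perturbed band `ε_j` is continuous
on `[0,1/2]` and within `|γ|` of the free band `ε⁰_j`, then every 2D band
`E_{m,n}(k) = ε_m(k₁) + ε_n(k₂)` with `m + n ≥ 8⌈4|γ|⌉ + 12` belongs to an
infinite chain of pairwise distinct bands, consecutive members of which
intersect somewhere on `[0,1/2]²`. -/
theorem infinite_chain_of_intersections (γ : ℝ) (eps : ℕ → ℝ → ℝ)
    (hcont : ∀ j : ℕ, 1 ≤ j → ContinuousOn (eps j) (Set.Icc (0 : ℝ) (1 / 2)))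
    (hbound : ∀ j : ℕ, 1 ≤ j → ∀ κ ∈ Set.Icc (0 : ℝ) (1 / 2),
      |eps j κ - eps0 j κ| ≤ |γ|)
    (m n : ℕ) (hm : 1 ≤ m) (hn : 1 ≤ n)
    (hmn : 8 * ⌈4 * |γ|⌉₊ + 12 ≤ m + n) :
    ∃ f : ℕ → ℕ × ℕ, Function.Injective f ∧ f 0 = (m, n) ∧
      (∀ j : ℕ, 1 ≤ (f j).1 ∧ 1 ≤ (f j).2) ∧
      ∀ j : ℕ, ∃ k1 ∈ Set.Icc (0 : ℝ) (1 / 2), ∃ k2 ∈ Set.Icc (0 : ℝ) (1 / 2),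
        eps (f j).1 k1 + eps (f j).2 k2
          = eps (f (j + 1)).1 k1 + eps (f (j + 1)).2 k2 := by
  obtain ⟨f, hi, h0, hp, he⟩ :=
    ChainAux.main (ChainAux.edge_rich γ eps hcont hbound) m n hm hn hmn
  exact ⟨f, hi, h0, hp, he⟩
end

section
/- Let $\gamma \in \mathbb{R}$ and set $K := \lceil 4|\gamma| \rceil + 1$. Define $\epsilon^0_{2a-1}(\kappa) := (a-1+\kappa)^2$, $\epsilon^0_{2a}(\kappa) := (a-\kappa)^2$ for $a \in \mathbb{N}_+$. Suppose that for each $j \in \mathbb{N}_+$, $\epsilon_j : [0, 1/2] \to \mathbb{R}$ is continuous and satisfies $|\epsilon_j(\kappa) - \epsilon^0_j(\kappa)| \le |\gamma|$ for all $\kappa \in [0,1/2]$, and set $E_{m,n}(k) := \epsilon_m(k_1) + \epsilon_n(k_2)$. If $S \subseteq \mathbb{N}_+^2$ is finite and $$\inf_{k \in [0,1/2]^2} \mathrm{dist}\big( \{E_{m,n}(k) : (m,n) \in S\},\ \{E_{m,n}(k) : (m,n) \notin S\} \big) > 0,$$ then $m + n \le 8K + 3$ for every $(m,n) \in S$, and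 consequently $|S| \le 32K^2 + 20K + 3$. -/
open Real

lemma eps0_odd (a : ℕ) (κ : ℝ) : eps0 (2 * a + 1) κ = ((a : ℝ) + κ) ^ 2 := by
  have h1 : (2 * a + 1) % 2 = 1 := by omega
  have h2 : (2 * a + 1 + 1) / 2 = a + 1 := by omega
  simp only [eps0, h1, h2, if_true]
  push_cast
  ring

lemma eps0_even (a : ℕ) (κ : ℝ) : eps0 (2 * a) κ = ((a : ℝ) - κ) ^ 2 := by
  have h1 : ¬ (2 * a) % 2 = 1 := by omega
  have h2 : (2 * a) / 2 = a := by omega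
  simp only [eps0, h1, h2, if_false]

lemma ends_wide (j t : ℕ) : ∃ κ ∈ Set.Icc (0 : ℝ) (1 / 2),
    eps0 j κ = ((j : ℝ) - 1) ^ 2 / 4 ∧
    eps0 (j + 2 * t + 1) κ = ((j : ℝ) + 2 * t + 1) ^ 2 / 4 := by
  rcases Nat.even_or_odd' j with ⟨a, rfl | rfl⟩
  · refine ⟨1 / 2, by norm_num, ?_, ?_⟩
    · rw [eps0_even]; push_cast; ring
    · rw [show 2 * a + 2 * t + 1 = 2 * (a + t) + 1 by ring, eps0_odd]; push_cast; ring
  · refine ⟨0, by norm_num, ?_, ?_⟩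
    · rw [eps0_odd]; push_cast; ring
    · rw [show 2 * a + 1 + 2 * t + 1 = 2 * (a + t + 1) by ring, eps0_even]; push_cast; ring

lemma ends_narrow (j t : ℕ) : ∃ κ ∈ Set.Icc (0 : ℝ) (1 / 2),
    eps0 j κ = (j : ℝ) ^ 2 / 4 ∧
    eps0 (j + 2 * t + 1) κ = ((j : ℝ) + 2 * t) ^ 2 / 4 := by
  rcases Nat.even_or_odd' j with ⟨a, rfl | rfl⟩
  · refine ⟨0, by norm_num, ?_, ?_⟩
    · rw [eps0_even]; push_cast; ring
    · rw [show 2 * a + 2 * t + 1 = 2 * (a + t) + 1 by ring, eps0_odd]; push_cast; ring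
  · refine ⟨1 / 2, by norm_num, ?_, ?_⟩
    · rw [eps0_odd]; push_cast; ring
    · rw [show 2 * a + 1 + 2 * t + 1 = 2 * (a + t + 1) by ring, eps0_even]; push_cast; ring

/-- The bands `(m, n + 1)` and `(m + 2t + 1, n)` cross. -/
lemma band_crossing (γ : ℝ) (eps : ℕ → ℝ → ℝ)
    (hcont : ∀ j : ℕ, 1 ≤ j → ContinuousOn (eps j) (Set.Icc (0 : ℝ) (1 / 2)))
    (hbound : ∀ j : ℕ, 1 ≤ j → ∀ κ ∈ Set.Icc (0 : ℝ) (1 / 2),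
      |eps j κ - eps0 j κ| ≤ |γ|)
    (m n t : ℕ) (hm : 1 ≤ m) (hn : 1 ≤ n)
    (h1 : t * (m + t) + ⌈4 * |γ|⌉₊ ≤ n)
    (h2 : ⌈4 * |γ|⌉₊ ≤ (t + 1) * (m + t)) :
    ∃ k1 ∈ Set.Icc (0 : ℝ) (1 / 2), ∃ k2 ∈ Set.Icc (0 : ℝ) (1 / 2),
      (eps m k1 + eps (n + 1) k2) - (eps (m + 2 * t + 1) k1 + eps n k2) = 0 := by
  have hK : 4 * |γ| ≤ (⌈4 * |γ|⌉₊ : ℝ) := Nat.le_ceil _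
  have h1' : (t : ℝ) * (m + t) + (⌈4 * |γ|⌉₊ : ℝ) ≤ n := by exact_mod_cast h1
  have h2' : (⌈4 * |γ|⌉₊ : ℝ) ≤ ((t : ℝ) + 1) * (m + t) := by exact_mod_cast h2
  obtain ⟨a1, ha1, ha2, ha3⟩ := ends_wide m t
  obtain ⟨b1, hb1, hb2, hb3⟩ := ends_narrow m t
  obtain ⟨a2, ha4, ha5, ha6⟩ := ends_narrow n 0
  obtain ⟨b2, hb4, hb5, hb6⟩ := ends_wide n 0
  simp only [mul_zero, add_zero, Nat.cast_zero] at ha6 hb6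
  have hc : ContinuousOn (fun x : ℝ × ℝ => (eps m x.1 + eps (n + 1) x.2)
      - (eps (m + 2 * t + 1) x.1 + eps n x.2))
      (Set.Icc (0 : ℝ) (1 / 2) ×ˢ Set.Icc (0 : ℝ) (1 / 2)) := by
    have f1 : ∀ j, 1 ≤ j → ContinuousOn (fun x : ℝ × ℝ => eps j x.1)
        (Set.Icc (0 : ℝ) (1 / 2) ×ˢ Set.Icc (0 : ℝ) (1 / 2)) := fun j hj =>
      (hcont j hj).comp continuousOn_fst (fun x hx => hx.1)
    have f2 : ∀ j, 1 ≤ j → ContinuousOn (fun x : ℝ × ℝ => eps j x.2)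
        (Set.Icc (0 : ℝ) (1 / 2) ×ˢ Set.Icc (0 : ℝ) (1 / 2)) := fun j hj =>
      (hcont j hj).comp continuousOn_snd (fun x hx => hx.2)
    exact ((f1 _ hm).add (f2 _ (by omega))).sub ((f1 _ (by omega)).add (f2 _ hn))
  have hp : IsPreconnected (Set.Icc (0 : ℝ) (1 / 2) ×ˢ Set.Icc (0 : ℝ) (1 / 2)) :=
    isPreconnected_Icc.prod isPreconnected_Icc
  have hiv := hp.intermediate_value (a := (a1, a2)) (b := (b1, b2)) ⟨ha1, ha4⟩ ⟨hb1, hb4⟩ hc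
  have hA : (eps m a1 + eps (n + 1) a2) - (eps (m + 2 * t + 1) a1 + eps n a2) ≤ 0 := by
    have e1 := abs_le.1 (hbound m hm a1 ha1)
    have e2 := abs_le.1 (hbound (n + 1) (by omega) a2 ha4)
    have e3 := abs_le.1 (hbound (m + 2 * t + 1) (by omega) a1 ha1)
    have e4 := abs_le.1 (hbound n hn a2 ha4)
    rw [ha2] at e1
    rw [ha6] at e2
    rw [ha3] at e3
    rw [ha5] at e4
    nlinarith [e1.1, e1.2, e2.1, e2.2, e3.1, e3.2, e4.1, e4.2]
  have hB : 0 ≤ (eps m b1 + eps (n + 1) b2) - (eps (m + 2 * t + 1) b1 + eps n b2) := by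
    have e1 := abs_le.1 (hbound m hm b1 hb1)
    have e2 := abs_le.1 (hbound (n + 1) (by omega) b2 hb4)
    have e3 := abs_le.1 (hbound (m + 2 * t + 1) (by omega) b1 hb1)
    have e4 := abs_le.1 (hbound n hn b2 hb4)
    rw [hb2] at e1
    rw [hb6] at e2
    rw [hb3] at e3
    rw [hb5] at e4
    nlinarith [e1.1, e1.2, e2.1, e2.2, e3.1, e3.2, e4.1, e4.2]
  obtain ⟨x, hx, hx0⟩ := hiv ⟨hA, hB⟩
  exact ⟨x.1, hx.1, x.2, hx.2, hx0⟩

/-- Choice of the size of a sum-increasing step. -/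
lemma exists_growth (L m n : ℕ) (hn : 3 * L + 3 ≤ n) (hm : m ≤ L + 1) (hm1 : 1 ≤ m) :
    ∃ t, 1 ≤ t ∧ t * (m + t) + L ≤ n ∧ L ≤ (t + 1) * (m + t) := by
  classical
  have hex : ∃ s, L ≤ (s + 1 + 1) * (m + (s + 1)) := ⟨L, by nlinarith⟩
  refine ⟨Nat.find hex + 1, by omega, ?_, Nat.find_spec hex⟩
  rcases h : Nat.find hex with _ | s
  · simp only [zero_add, one_mul]; omega
  · have := Nat.find_min hex (m := s) (by omega)
    nlinarith

lemma card_triangle (S : Finset (ℕ × ℕ)) (hS : ∀ p ∈ S, 1 ≤ p.1 ∧ 1 ≤ p.2) (K : ℕ)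
    (h : ∀ p ∈ S, p.1 + p.2 ≤ 8 * K + 3) : S.card ≤ 32 * K ^ 2 + 20 * K + 3 := by
  have hsub : S ⊆ (Finset.range (8 * K + 3)).biUnion
      (fun s => (Finset.range s).image (fun i => (i + 1, s - i))) := by
    rintro ⟨a, b⟩ hp
    have h1 := hS _ hp
    have h2 := h _ hp
    simp only at h1 h2
    simp only [Finset.mem_biUnion, Finset.mem_range, Finset.mem_image, Prod.mk.injEq]
    exact ⟨a + b - 1, by omega, a - 1, by omega, by omega, by omega⟩
  have h3 : S.card ≤ ∑ s ∈ Finset.range (8 * K + 3), s := by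
    refine (Finset.card_le_card hsub).trans (Finset.card_biUnion_le.trans ?_)
    refine Finset.sum_le_sum fun s _ => ?_
    exact Finset.card_image_le.trans (by simp)
  have h4 := Finset.sum_range_id_mul_two (8 * K + 3)
  have h5 : 8 * K + 3 - 1 = 8 * K + 2 := by omega
  rw [h5] at h4
  nlinarith

/-- Quantitative form of Theorem 5: if a finite set `S` of band labels is
uniformly isolated from all other bands, then every `(m,n) ∈ S` satisfies
`m + n ≤ 8K + 3` with `K = ⌈4|γ|⌉ + 1`, and hence `|S| ≤ 32K² + 20K + 3`. -/
theorem isolated_band_set_bound (γ : ℝ) (eps : ℕ → ℝ → ℝ)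
    (hcont : ∀ j : ℕ, 1 ≤ j → ContinuousOn (eps j) (Set.Icc (0 : ℝ) (1 / 2)))
    (hbound : ∀ j : ℕ, 1 ≤ j → ∀ κ ∈ Set.Icc (0 : ℝ) (1 / 2),
      |eps j κ - eps0 j κ| ≤ |γ|)
    (S : Finset (ℕ × ℕ)) (hS : ∀ p ∈ S, 1 ≤ p.1 ∧ 1 ≤ p.2)
    (hiso : ∃ c > (0 : ℝ), ∀ k1 ∈ Set.Icc (0 : ℝ) (1 / 2),
      ∀ k2 ∈ Set.Icc (0 : ℝ) (1 / 2), ∀ p ∈ S, ∀ q : ℕ × ℕ,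
        1 ≤ q.1 → 1 ≤ q.2 → q ∉ S →
        c ≤ |(eps p.1 k1 + eps p.2 k2) - (eps q.1 k1 + eps q.2 k2)|) :
    (∀ p ∈ S, p.1 + p.2 ≤ 8 * (⌈4 * |γ|⌉₊ + 1) + 3) ∧
    S.card ≤ 32 * (⌈4 * |γ|⌉₊ + 1) ^ 2 + 20 * (⌈4 * |γ|⌉₊ + 1) + 3 := by
  obtain ⟨c, hc, hiso⟩ := hiso
  have stepA : ∀ m n t : ℕ, (m, n + 1) ∈ S → 1 ≤ m → 1 ≤ n →
      t * (m + t) + ⌈4 * |γ|⌉₊ ≤ n → ⌈4 * |γ|⌉₊ ≤ (t + 1) * (m + t) →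
      (m + 2 * t + 1, n) ∈ S := by
    intro m n t hmem hm hn h1 h2
    by_contra hq
    obtain ⟨k1, hk1, k2, hk2, h0⟩ := band_crossing γ eps hcont hbound m n t hm hn h1 h2
    have := hiso k1 hk1 k2 hk2 _ hmem _ (by simp) hn hq
    simp only [h0, abs_zero] at this
    linarith
  have stepB : ∀ m n t : ℕ, (n + 1, m) ∈ S → 1 ≤ m → 1 ≤ n →
      t * (m + t) + ⌈4 * |γ|⌉₊ ≤ n → ⌈4 * |γ|⌉₊ ≤ (t + 1) * (m + t) →
      (n, m + 2 * t + 1) ∈ S := by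
    intro m n t hmem hm hn h1 h2
    by_contra hq
    obtain ⟨k1, hk1, k2, hk2, h0⟩ := band_crossing γ eps hcont hbound m n t hm hn h1 h2
    have := hiso k2 hk2 k1 hk1 _ hmem _ hn (by simp) hq
    simp only at this
    rw [show eps (n + 1) k2 + eps m k1 - (eps n k2 + eps (m + 2 * t + 1) k1) = 0 by linarith,
      abs_zero] at this
    linarith
  generalize ⌈4 * |γ|⌉₊ = L at stepA stepB ⊢
  have main : ∀ p ∈ S, p.1 + p.2 ≤ 8 * (L + 1) + 3 := by
    by_contra hcon
    push Not at hcon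
    obtain ⟨p0, hp0, hp0'⟩ := hcon
    obtain ⟨p1, hp1, hmax1⟩ := S.exists_max_image (fun p => p.1 + p.2) ⟨p0, hp0⟩
    obtain ⟨p, hp, hmax2⟩ := (S.filter (fun p => p.1 + p.2 = p1.1 + p1.2)).exists_max_image
      (fun p => p.2) ⟨p1, by simp [hp1]⟩
    obtain ⟨hpS, hsum⟩ := Finset.mem_filter.1 hp
    obtain ⟨m, n⟩ := p
    have h01 := hmax1 p0 hp0
    have hpos := hS _ hpS
    simp only at h01 hsum hpos
    by_cases hn : n ≤ L + 1
    · obtain ⟨m', rfl⟩ : ∃ m', m = m' + 1 := ⟨m - 1, by omega⟩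
      obtain ⟨t, ht, h1, h2⟩ := exists_growth L n m' (by omega) hn hpos.2
      have := hmax1 _ (stepB n m' t hpS hpos.2 (by omega) h1 h2)
      simp only at this
      omega
    by_cases hm : m ≤ L + 1
    · obtain ⟨n', rfl⟩ : ∃ n', n = n' + 1 := ⟨n - 1, by omega⟩
      obtain ⟨t, ht, h1, h2⟩ := exists_growth L m n' (by omega) hm hpos.1
      have := hmax1 _ (stepA m n' t hpS hpos.1 (by omega) h1 h2)
      simp only at this
      omega
    · obtain ⟨m', rfl⟩ : ∃ m', m = m' + 1 := ⟨m - 1, by omega⟩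
      have hq := stepB n m' 0 hpS hpos.2 (by omega) (by omega) (by omega)
      have := hmax2 _ (Finset.mem_filter.2 ⟨hq, by simp only; omega⟩)
      simp only at this
      omega
  exact ⟨main, card_triangle S hS (L + 1) main⟩
end

section
/- Let $k = (k_1, k_2) \in \mathbb{R}^2$, $B \in \mathbb{R}$, $\gamma \in \mathbb{R}$, let $\ell \in \mathbb{Z}$, and set $\kappa := (k_1 - \tfrac12, k_2 - \tfrac12)$, $\delta := B - (2\ell+1)\pi$. Let $M$ be the $4\times4$ Hermitian matrix $M := D + \tfrac{\gamma}{2} C$, where $D := \mathrm{diag}\big(k_1^2 + k_2^2,\ (1-k_1)^2 + k_2^2,\ k_1^2 + (1-k_2)^2,\ (1-k_1)^2 + (1-k_2)^2\big)$ and $$C := \begin{pmatrix} 0 & e^{iBk_2} & 1 & 0 \\ e^{-iBk_2} & 0 & 0 & 1 \\ 1 & 0 & 0 & e^{-iB(1-k_2)} \\ 0 & 1 & e^{iB(1-k_2)} & 0 \end{pmatrix}.$$ Then the eigenvalues of $M$, with multiplicity, are the four real numbers $$\tfrac12 + |\kappa|^2 + s_1 \sqrt{\,|\kappa|^2 + \tfrac{\gamma^2}{2}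 + 2 s_2 \sqrt{\kappa_1^2 \kappa_2^2 + \tfrac{\gamma^2}{4}|\kappa|^2 + \tfrac{\gamma^4}{16}\sin^2(\tfrac{\delta}{2})}\,},\qquad s_1, s_2 \in \{+1, -1\},$$ where $|\kappa|^2 = \kappa_1^2 + \kappa_2^2$ (in particular, all four expressions under the square roots are nonnegative). -/
open Matrix Real

/-- The inner radicand `κ₁²κ₂² + (γ²/4)|κ|² + (γ⁴/16) sin²(δ/2)`. -/
noncomputable def innerRad (γ κ1 κ2 δ : ℝ) : ℝ :=
  κ1 ^ 2 * κ2 ^ 2 + γ ^ 2 / 4 * (κ1 ^ 2 + κ2 ^ 2)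
    + γ ^ 4 / 16 * (Real.sin (δ / 2)) ^ 2

/-- The four eigenvalue branches
`1/2 + |κ|² + s₁ √(|κ|² + γ²/2 + 2 s₂ √(innerRad))`, `s₁, s₂ ∈ {±1}`. -/
noncomputable def zEig (γ κ1 κ2 δ s1 s2 : ℝ) : ℝ :=
  1 / 2 + (κ1 ^ 2 + κ2 ^ 2)
    + s1 * Real.sqrt ((κ1 ^ 2 + κ2 ^ 2) + γ ^ 2 / 2
        + 2 * s2 * Real.sqrt (innerRad γ κ1 κ2 δ))

/-- The diagonal part `D` of the Grushin effective matrix at quasimomentum `k`. -/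
noncomputable def grushinD (k1 k2 : ℝ) : Matrix (Fin 4) (Fin 4) ℂ :=
  !![((k1 ^ 2 + k2 ^ 2 : ℝ) : ℂ), 0, 0, 0;
     0, (((1 - k1) ^ 2 + k2 ^ 2 : ℝ) : ℂ), 0, 0;
     0, 0, ((k1 ^ 2 + (1 - k2) ^ 2 : ℝ) : ℂ), 0;
     0, 0, 0, (((1 - k1) ^ 2 + (1 - k2) ^ 2 : ℝ) : ℂ)]

/-- The off-diagonal part `C` of the Grushin effective matrix. -/
noncomputable def grushinC (B k2 : ℝ) : Matrix (Fin 4) (Fin 4) ℂ :=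
  !![0, Complex.exp (Complex.I * (B : ℂ) * (k2 : ℂ)), 1, 0;
     Complex.exp (-Complex.I * (B : ℂ) * (k2 : ℂ)), 0, 0, 1;
     1, 0, 0, Complex.exp (-Complex.I * (B : ℂ) * ((1 : ℂ) - (k2 : ℂ)));
     0, 1, Complex.exp (Complex.I * (B : ℂ) * ((1 : ℂ) - (k2 : ℂ))), 0]

/-- Exact eigenvalue computation for the `4×4` Grushin effective matrix
`M = D + (γ/2) C`: with `κ = k - (1/2,1/2)` and `δ = B - (2ℓ+1)π`, the
radicand with `s₂ = -1` is nonnegative, and the characteristic polynomial of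
`M` factors through the four real branches `zEig γ κ₁ κ₂ δ s₁ s₂`,
`s₁, s₂ ∈ {±1}`. -/
theorem grushin_matrix_eigenvalues (k1 k2 B γ : ℝ) (ℓ : ℤ)
    (κ1 κ2 δ : ℝ) (hκ1 : κ1 = k1 - 1 / 2) (hκ2 : κ2 = k2 - 1 / 2)
    (hδ : δ = B - (2 * (ℓ : ℝ) + 1) * Real.pi) :
    0 ≤ (κ1 ^ 2 + κ2 ^ 2) + γ ^ 2 / 2 - 2 * Real.sqrt (innerRad γ κ1 κ2 δ) ∧
    ∀ z : ℂ,
      (z • (1 : Matrix (Fin 4) (Fin 4) ℂ)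
          - (grushinD k1 k2 + ((γ : ℂ) / 2) • grushinC B k2)).det
        = (z - ((zEig γ κ1 κ2 δ 1 1 : ℝ) : ℂ))
          * (z - ((zEig γ κ1 κ2 δ 1 (-1) : ℝ) : ℂ))
          * (z - ((zEig γ κ1 κ2 δ (-1) 1 : ℝ) : ℂ))
          * (z - ((zEig γ κ1 κ2 δ (-1) (-1) : ℝ) : ℂ)) := by
  have hR0 : 0 ≤ innerRad γ κ1 κ2 δ := by unfold innerRad; positivity
  have hsin : Real.sin (δ / 2) ^ 2 ≤ 1 := Real.sin_sq_le_one _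
  have hle : 2 * Real.sqrt (innerRad γ κ1 κ2 δ) ≤ (κ1 ^ 2 + κ2 ^ 2) + γ ^ 2 / 2 := by
    have h1 : Real.sqrt (innerRad γ κ1 κ2 δ) ≤ ((κ1 ^ 2 + κ2 ^ 2) + γ ^ 2 / 2) / 2 := by
      apply Real.sqrt_le_iff.mpr
      refine ⟨by positivity, ?_⟩
      unfold innerRad
      have h2 : 0 ≤ γ ^ 4 * (1 - Real.sin (δ / 2) ^ 2) :=
        mul_nonneg (by positivity) (by linarith)
      nlinarith [sq_nonneg (κ1 ^ 2 - κ2 ^ 2)]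
    linarith
  refine ⟨by linarith, ?_⟩
  intro z
  have hr := Real.sq_sqrt hR0
  have hp : Real.sqrt ((κ1 ^ 2 + κ2 ^ 2) + γ ^ 2 / 2
        + 2 * 1 * Real.sqrt (innerRad γ κ1 κ2 δ)) ^ 2 = (κ1 ^ 2 + κ2 ^ 2) + γ ^ 2 / 2
        + 2 * 1 * Real.sqrt (innerRad γ κ1 κ2 δ) := Real.sq_sqrt (by positivity)
  have hm : Real.sqrt ((κ1 ^ 2 + κ2 ^ 2) + γ ^ 2 / 2
        + 2 * (-1) * Real.sqrt (innerRad γ κ1 κ2 δ)) ^ 2 = (κ1 ^ 2 + κ2 ^ 2) + γ ^ 2 / 2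
        + 2 * (-1) * Real.sqrt (innerRad γ κ1 κ2 δ) := Real.sq_sqrt (by linarith)
  have hcos : Real.cos B = 2 * Real.sin (δ / 2) ^ 2 - 1 := by
    have h1 : B = (δ + Real.pi) + (ℓ : ℝ) * (2 * Real.pi) := by rw [hδ]; ring
    rw [h1, Real.cos_add_int_mul_two_pi, Real.cos_add_pi]
    have h3 := Real.cos_two_mul (δ / 2)
    have h4 := Real.sin_sq_add_cos_sq (δ / 2)
    rw [show 2 * (δ / 2) = δ by ring] at h3
    linarith
  unfold zEig
  generalize Real.sqrt ((κ1 ^ 2 + κ2 ^ 2) + γ ^ 2 / 2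
        + 2 * 1 * Real.sqrt (innerRad γ κ1 κ2 δ)) = p at *
  generalize Real.sqrt ((κ1 ^ 2 + κ2 ^ 2) + γ ^ 2 / 2
        + 2 * (-1) * Real.sqrt (innerRad γ κ1 κ2 δ)) = q at *
  generalize Real.sqrt (innerRad γ κ1 κ2 δ) = r at *
  unfold innerRad at hr
  generalize Real.sin (δ / 2) = s at *
  have hE : Complex.exp (Complex.I * (B : ℂ) * (k2 : ℂ))
      * Complex.exp (-Complex.I * (B : ℂ) * (k2 : ℂ)) = 1 := by
    rw [← Complex.exp_add, ← Complex.exp_zero]; congr 1; ring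
  have hF : Complex.exp (Complex.I * (B : ℂ) * ((1 : ℂ) - (k2 : ℂ)))
      * Complex.exp (-Complex.I * (B : ℂ) * ((1 : ℂ) - (k2 : ℂ))) = 1 := by
    rw [← Complex.exp_add, ← Complex.exp_zero]; congr 1; ring
  have hEF : Complex.exp (Complex.I * (B : ℂ) * (k2 : ℂ))
      * Complex.exp (Complex.I * (B : ℂ) * ((1 : ℂ) - (k2 : ℂ)))
      + Complex.exp (-Complex.I * (B : ℂ) * (k2 : ℂ))
      * Complex.exp (-Complex.I * (B : ℂ) * ((1 : ℂ) - (k2 : ℂ))) = 4 * (s : ℂ) ^ 2 - 2 := by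
    have h1 : (4 * (s : ℂ) ^ 2 - 2) = 2 * Complex.cos (B : ℂ) := by
      rw [← Complex.ofReal_cos, hcos]; push_cast; ring
    rw [h1, Complex.two_cos, ← Complex.exp_add, ← Complex.exp_add]
    congr 2 <;> ring
  unfold grushinD grushinC
  generalize Complex.exp (Complex.I * (B : ℂ) * (k2 : ℂ)) = E at *
  generalize Complex.exp (-Complex.I * (B : ℂ) * (k2 : ℂ)) = E' at *
  generalize Complex.exp (Complex.I * (B : ℂ) * ((1 : ℂ) - (k2 : ℂ))) = F at *
  generalize Complex.exp (-Complex.I * (B : ℂ) * ((1 : ℂ) - (k2 : ℂ))) = F' at *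
  obtain rfl : k1 = κ1 + 1 / 2 := by linarith
  obtain rfl : k2 = κ2 + 1 / 2 := by linarith
  have hrC : (r : ℂ) ^ 2 = (κ1 : ℂ) ^ 2 * (κ2 : ℂ) ^ 2
      + (γ : ℂ) ^ 2 / 4 * ((κ1 : ℂ) ^ 2 + (κ2 : ℂ) ^ 2) + (γ : ℂ) ^ 4 / 16 * (s : ℂ) ^ 2 := by
    exact_mod_cast congrArg (fun x : ℝ => (x : ℂ)) hr
  have hpC : (p : ℂ) ^ 2 = (κ1 : ℂ) ^ 2 + (κ2 : ℂ) ^ 2 + (γ : ℂ) ^ 2 / 2 + 2 * 1 * (r : ℂ) := by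
    exact_mod_cast congrArg (fun x : ℝ => (x : ℂ)) hp
  have hqC : (q : ℂ) ^ 2 = (κ1 : ℂ) ^ 2 + (κ2 : ℂ) ^ 2 + (γ : ℂ) ^ 2 / 2
      + 2 * (-1) * (r : ℂ) := by
    exact_mod_cast congrArg (fun x : ℝ => (x : ℂ)) hm
  obtain ⟨w, rfl⟩ : ∃ w : ℂ, z = w + (1 / 2 + ((κ1 : ℂ) ^ 2 + (κ2 : ℂ) ^ 2)) :=
    ⟨z - (1 / 2 + ((κ1 : ℂ) ^ 2 + (κ2 : ℂ) ^ 2)), by ring⟩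
  have hrhs : ∀ a b : ℂ, a = (w ^ 2 - (p : ℂ) ^ 2) * (w ^ 2 - (q : ℂ) ^ 2) →
      b = (w ^ 2 - (p : ℂ) ^ 2) * (w ^ 2 - (q : ℂ) ^ 2) → a = b :=
    fun a b h1 h2 => h1.trans h2.symm
  apply hrhs
  · rw [hpC, hqC]
    simp [Matrix.det_succ_row_zero, Fin.sum_univ_succ, Fin.succAbove, Matrix.submatrix,
      Matrix.one_apply]
    generalize (κ1 : ℂ) = x at *
    generalize (κ2 : ℂ) = y at *
    generalize (γ : ℂ) = g at *
    linear_combination (-(g / 2) ^ 2 * ((w - x + y) * (w + x + y)) + (g / 2) ^ 4 * (F * F')) * hE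
      + (-(g / 2) ^ 2 * ((w - x - y) * (w + x - y)) + (g / 2) ^ 4) * hF
      - (g / 2) ^ 4 * hEF + 4 * hrC
  · push_cast
    ring
end
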